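/- Assume the feature vectors {φ(y)}_{y∈Y} are orthonormal, the ground truth reward r_G satisfies the reward structure assumption, and the initial parameters θ_0 satisfy the initial policy assumption (orthonormal case). Let ε ∈ (0, Δ1), and suppose θ_t is the gradient flow maximizing V_G. Then any time t with V_G(θ_t) ≥ r_G(y_⋆) − ε satisfies t ≥ [2√2 · M^{14/13} · Δ1 · r_G(y_med) · (1 − e^{−√2(Δ1 − ε)})] / [(Δ1 + Δ2)(1 + 8Δ1)] · π_{θ_0}(y_⋆)^{−14/13}. -/

import Mathlib

open scoped BigOperators RealInnerProductSpace

noncomputable def policy {Y : Type*} [Fintype Y] {D : ℕ}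
    (φ : Y → EuclideanSpace ℝ (Fin D)) (θ : EuclideanSpace ℝ (Fin D)) (y : Y) : ℝ :=
  Real.exp ⟪φ y, θ⟫ / ∑ z, Real.exp ⟪φ z, θ⟫

noncomputable def expReward {Y : Type*} [Fintype Y] {D : ℕ}
    (φ : Y → EuclideanSpace ℝ (Fin D)) (r : Y → ℝ) (θ : EuclideanSpace ℝ (Fin D)) : ℝ :=
  ∑ y, policy φ θ y * r y

/-!
Write `p`, `m`, `q` for the probabilities of `ystar`, of `ymed` and of `Ybad` along the flow, and
`Δ₁`, `Δ₂` for the two reward gaps, so that the expected reward is `r ymed + Δ₁ * p - Δ₂ * q`. While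
`5 * Δ₁ * p ≤ Δ₂ * q`, the flow mostly moves mass from `Ybad` to `ymed`: both `p / m` and `q / m`
decrease, and so does `7 * log (p / m) - 2 * log (q / m)`. Since `p / q` grows at most at rate
`Δ₁ + Δ₂`, leaving this regime takes time. At the exit `q / m` is at most of order `p / m`, so the
monotone quantity bounds `(p / m) ^ 5` by `p₀ ^ 7 / q₀ ^ 2` up to constants, and the assumed lower
bound of order `p₀ ^ (7 / 13)` on `q₀` makes `p / m` at most of order `p₀ ^ (14 / 13)`. From there
on, `m / p` decreases at rate at most `2 * Δ₁`, so `p / m` needs a time of order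
`p₀ ^ (-14 / 13)` to double; and until it has doubled, the gain over `r ymed` is itself of order
`p₀ ^ (14 / 13)`.
-/

theorem le_div_four_of_pow_eq {x B : ℝ} (hB : 0 ≤ B) (hB_le : B ≤ 1 / 10)
    (h : B ^ 13 = x ^ 7) : x ≤ B / 4 := by
  refine le_of_pow_le_pow_left₀ (n := 7) (by norm_num) (by positivity) ?_
  calc x ^ 7 = B ^ 7 * B ^ 6 := by rw [← h]; ring
    _ ≤ B ^ 7 * (1 / 10) ^ 6 := by gcongr
    _ ≤ B ^ 7 * (1 / 4) ^ 7 := by gcongr; norm_num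
    _ = (B / 4) ^ 7 := by ring

theorem two_mul_mul_rpow_le {K M p a Δ q : ℝ} (hK : 0 ≤ K) (hM : 0 < M) (hp : 0 ≤ p)
    (hΔ : 0 < Δ) (ha : 0 ≤ a) (hKM : K * M ≤ 1) (h : 2 * p ^ a / (Δ * M ^ a) ≤ q) :
    2 * (K * p) ^ a ≤ Δ * q :=
  calc 2 * (K * p) ^ a ≤ 2 * (p / M) ^ a := by
        gcongr
        rw [le_div_iff₀ hM]
        nlinarith
    _ = Δ * (2 * p ^ a / (Δ * M ^ a)) := by
        rw [Real.div_rpow hp hM.le]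
        field_simp
    _ ≤ Δ * q := by gcongr

theorem rpow_mul_rpow_neg_mul_le {K M p a δ t : ℝ} (hK : 0 ≤ K) (hM : 0 ≤ M) (hp : 0 < p)
    (ht : 0 ≤ t) (ha : 1 ≤ a) (hKM : K * M ≤ 1 / 20) (hδ : δ ≤ 20 * (K * p) ^ a * t) :
    M ^ a * p ^ (-a) * δ ≤ t := by
  have hKM_nonneg : 0 ≤ K * M := mul_nonneg hK hM
  have hKM_rpow : (K * M) ^ a ≤ 1 / 20 :=
    (Real.rpow_le_self_of_le_one hKM_nonneg (by linarith) ha).trans hKM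
  calc M ^ a * p ^ (-a) * δ ≤ M ^ a * p ^ (-a) * (20 * (K * p) ^ a * t) := by gcongr
    _ = 20 * (K * M) ^ a * t := by
        rw [Real.mul_rpow hK hp.le, Real.mul_rpow hK hM, Real.rpow_neg hp.le]
        field_simp
    _ ≤ 20 * (1 / 20) * t := by gcongr
    _ = t := by ring

theorem rate_mul_one_sub_exp_le {Δ₁ Δ₂ ρ δ : ℝ} (hΔ₁ : 0 < Δ₁) (hρ : 0 ≤ ρ) (hρΔ₂ : ρ ≤ Δ₂)
    (hδ : 0 ≤ δ) :
    2 * √2 * Δ₁ * ρ * (1 - Real.exp (-(√2 * δ))) / ((Δ₁ + Δ₂) * (1 + 8 * Δ₁)) ≤ δ := by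
  have hexp : 1 - Real.exp (-(√2 * δ)) ≤ √2 * δ := by
    linarith [Real.add_one_le_exp (-(√2 * δ))]
  have hΔ₂ : 0 ≤ Δ₂ := hρ.trans hρΔ₂
  refine div_le_of_le_mul₀ (by positivity) hδ ?_
  calc 2 * √2 * Δ₁ * ρ * (1 - Real.exp (-(√2 * δ))) ≤ 2 * √2 * Δ₁ * ρ * (√2 * δ) := by gcongr
    _ = 4 * Δ₁ * ρ * δ := by
        linear_combination 2 * Δ₁ * ρ * δ * Real.mul_self_sqrt (zero_le_two (α := ℝ))
    _ ≤ (1 + 8 * Δ₁) * (Δ₁ + Δ₂) * δ := by gcongr <;> linarith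
    _ = δ * ((Δ₁ + Δ₂) * (1 + 8 * Δ₁)) := by ring

theorem mul_min_one_rpow_div_le {K ρ a : ℝ} (hK : 0 < K) (hρ : ρ ∈ Set.Icc 0 1) (ha : 0 ≤ a) :
    K * min 1 (0.05 * ρ ^ a / K) ≤ 1 / 20 := by
  have hρ_rpow : ρ ^ a ≤ 1 := Real.rpow_le_one hρ.1 hρ.2 ha
  calc K * min 1 (0.05 * ρ ^ a / K) ≤ K * (0.05 * ρ ^ a / K) := by gcongr; exact min_le_right _ _
    _ = 0.05 * ρ ^ a := mul_div_cancel₀ _ hK.ne'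
    _ ≤ 1 / 20 := by linarith

theorem sum_sq_div_sum_mem_Icc {ι : Type*} {S : Finset ι} {f : ι → ℝ} (hf : ∀ i ∈ S, 0 ≤ f i) :
    (∑ i ∈ S, f i ^ 2) / ∑ i ∈ S, f i ∈ Set.Icc 0 (∑ i ∈ S, f i) :=
  ⟨div_nonneg (Finset.sum_nonneg fun _ _ => sq_nonneg _) (Finset.sum_nonneg hf),
    div_le_of_le_mul₀ (Finset.sum_nonneg hf) (Finset.sum_nonneg hf)
      ((Finset.sum_sq_le_sq_sum_of_nonneg hf).trans_eq (sq _))⟩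

section Calculus

open Set

theorem exists_first_le_of_continuousOn {α β : Type*} [ConditionallyCompleteLinearOrder α]
    [TopologicalSpace α] [OrderTopology α] [LinearOrder β] [TopologicalSpace β]
    [ClosedIciTopology β] {f : α → β} {a b : α} {c : β} (hab : a ≤ b)
    (hf : ContinuousOn f (Icc a b)) (hc : c ≤ f b) :
    ∃ T ∈ Icc a b, c ≤ f T ∧ ∀ s ∈ Ico a T, f s < c := by
  have hclosed : IsClosed (Icc a b ∩ f ⁻¹' Ici c) :=
    hf.preimage_isClosed_of_isClosed isClosed_Icc isClosed_Ici
  have hcompact : IsCompact (Icc a b ∩ f ⁻¹' Ici c) :=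
    isCompact_Icc.of_isClosed_subset hclosed inter_subset_left
  obtain ⟨T, ⟨hT, hcT⟩, hleast⟩ := hcompact.exists_isLeast ⟨b, right_mem_Icc.2 hab, hc⟩
  refine ⟨T, hT, hcT, fun s hs => lt_of_not_ge fun hcs => hs.2.not_ge ?_⟩
  exact hleast ⟨⟨hs.1, hs.2.le.trans hT.2⟩, hcs⟩

theorem sub_le_mul_sub_of_hasDerivAt_le {f : ℝ → ℝ} {a b C : ℝ} (hab : a ≤ b)
    (hf : ContinuousOn f (Icc a b)) (hf' : ∀ s ∈ Ioo a b, ∃ f' ≤ C, HasDerivAt f f' s) :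
    f b - f a ≤ C * (b - a) := by
  refine (convex_Icc a b).image_sub_le_mul_sub_of_deriv_le hf ?_ ?_ a (left_mem_Icc.2 hab) b
    (right_mem_Icc.2 hab) hab
  all_goals
    rw [interior_Icc]
    intro s hs
    obtain ⟨f', hle, hderiv⟩ := hf' s hs
  · exact hderiv.differentiableAt.differentiableWithinAt
  · exact hderiv.deriv.trans_le hle

theorem le_of_hasDerivAt_nonpos {f : ℝ → ℝ} {a b : ℝ} (hab : a ≤ b)
    (hf : ContinuousOn f (Icc a b)) (hf' : ∀ s ∈ Ioo a b, ∃ f' ≤ 0, HasDerivAt f f' s) :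
    f b ≤ f a := by
  linarith [sub_le_mul_sub_of_hasDerivAt_le hab hf hf']

end Calculus

/-- The differential relations obeyed, along gradient flow with orthonormal features, by the
probabilities `p`, `m` and `q` of the best output, of the intermediate output and of the set of bad
outputs, where `Δ₁` and `Δ₂` are the two reward gaps. They are phrased through the log-odds relative
to the intermediate output. The slope for the bad outputs depends on how `q` is spread over them, so
it is only known up to an interval. -/
structure ReducedFlow (Δ₁ Δ₂ : ℝ) (p m q : ℝ → ℝ) : Prop where
  gap₁_pos : 0 < Δ₁
  gap₂_pos : 0 < Δ₂
  p_pos (s : ℝ) : 0 < p s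
  m_pos (s : ℝ) : 0 < m s
  q_pos (s : ℝ) : 0 < q s
  sum_eq_one (s : ℝ) : p s + m s + q s = 1
  continuousOn_p : ContinuousOn p (Set.Ici 0)
  continuousOn_m : ContinuousOn m (Set.Ici 0)
  continuousOn_q : ContinuousOn q (Set.Ici 0)
  hasDerivAt_log_p_div (s : ℝ) (hs : 0 ≤ s) : HasDerivAt (fun s => Real.log (p s / m s))
    (Δ₁ * p s * (2 * m s + q s) - Δ₂ * q s * (m s - p s)) s
  hasDerivAt_log_q_div (s : ℝ) (hs : 0 ≤ s) :
    ∃ v ∈ Set.Icc (Δ₁ * p s * (m s - q s) - Δ₂ * q s * (2 * m s + p s))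
      (m s * (Δ₁ * p s - Δ₂ * q s)), HasDerivAt (fun s => Real.log (q s / m s)) v s

namespace ReducedFlow

open Set

variable {Δ₁ Δ₂ : ℝ} {p m q : ℝ → ℝ}

theorem continuousOn_p_div (h : ReducedFlow Δ₁ Δ₂ p m q) :
    ContinuousOn (fun s => p s / m s) (Ici 0) :=
  h.continuousOn_p.div h.continuousOn_m fun s _ => (h.m_pos s).ne'

theorem continuousOn_log_p_div (h : ReducedFlow Δ₁ Δ₂ p m q) :
    ContinuousOn (fun s => Real.log (p s / m s)) (Ici 0) :=
  h.continuousOn_p_div.log fun s _ => (div_pos (h.p_pos s) (h.m_pos s)).ne'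

theorem continuousOn_log_q_div (h : ReducedFlow Δ₁ Δ₂ p m q) :
    ContinuousOn (fun s => Real.log (q s / m s)) (Ici 0) :=
  fun s hs =>
    let ⟨_, _, hv⟩ := h.hasDerivAt_log_q_div s hs
    hv.continuousAt.continuousWithinAt

theorem log_le_mul_of_crossing (h : ReducedFlow Δ₁ Δ₂ p m q) {c t : ℝ} (hc : 0 < c) (ht : 0 ≤ t)
    (h₀ : c * (Δ₁ * p 0) ≤ Δ₂ * q 0) (h₁ : Δ₂ * q t ≤ Δ₁ * p t) :
    Real.log c ≤ (Δ₁ + Δ₂) * t := by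
  have hgap₁ := h.gap₁_pos
  have hgap₂ := h.gap₂_pos
  have hslope := sub_le_mul_sub_of_hasDerivAt_le (C := Δ₁ + Δ₂) ht
    ((h.continuousOn_log_p_div.sub h.continuousOn_log_q_div).mono Icc_subset_Ici_self)
    fun s hs => by
      obtain ⟨v, hv, hderiv⟩ := h.hasDerivAt_log_q_div s hs.1.le
      refine ⟨_, ?_, (h.hasDerivAt_log_p_div s hs.1.le).sub hderiv⟩
      have hsq : (p s + m s + q s) ^ 2 = 1 := by rw [h.sum_eq_one, one_pow]
      have hpm := mul_pos (h.p_pos s) (h.m_pos s)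
      have hqm := mul_pos (h.q_pos s) (h.m_pos s)
      have hp : p s * (m s + 2 * q s) ≤ 1 := by
        nlinarith only [hsq, hpm, hqm, sq_nonneg (p s), sq_nonneg (m s), sq_nonneg (q s)]
      have hq : q s * (m s + 2 * p s) ≤ 1 := by
        nlinarith only [hsq, hpm, hqm, sq_nonneg (p s), sq_nonneg (m s), sq_nonneg (q s)]
      calc _ ≤ Δ₁ * (p s * (m s + 2 * q s)) + Δ₂ * (q s * (m s + 2 * p s)) := by
            linarith [hv.1]
        _ ≤ Δ₁ * 1 + Δ₂ * 1 := by gcongr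
        _ = Δ₁ + Δ₂ := by ring
  have hlog (s : ℝ) : Real.log (p s / m s) - Real.log (q s / m s)
      = Real.log (p s) - Real.log (q s) := by
    rw [Real.log_div (h.p_pos s).ne' (h.m_pos s).ne',
      Real.log_div (h.q_pos s).ne' (h.m_pos s).ne']
    ring
  have hp₀ := h.p_pos 0
  have hstart := Real.log_le_log (by positivity) h₀
  have hend := Real.log_le_log (mul_pos hgap₂ (h.q_pos t)) h₁
  rw [Real.log_mul hc.ne' (by positivity), Real.log_mul hgap₁.ne' hp₀.ne',
    Real.log_mul hgap₂.ne' (h.q_pos 0).ne'] at hstart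
  rw [Real.log_mul hgap₂.ne' (h.q_pos t).ne', Real.log_mul hgap₁.ne' (h.p_pos t).ne'] at hend
  simp only [Pi.sub_apply, hlog] at hslope
  linarith

theorem q_div_le_of_dominated (h : ReducedFlow Δ₁ Δ₂ p m q) {T : ℝ} (hT : 0 ≤ T)
    (hdom : ∀ s ∈ Ioo 0 T, Δ₁ * p s ≤ Δ₂ * q s) : q T / m T ≤ q 0 / m 0 := by
  refine (Real.log_le_log_iff (div_pos (h.q_pos T) (h.m_pos T))
    (div_pos (h.q_pos 0) (h.m_pos 0))).1 ?_
  refine le_of_hasDerivAt_nonpos (f := fun s => Real.log (q s / m s)) hT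
    (h.continuousOn_log_q_div.mono Icc_subset_Ici_self)
    fun s hs => ?_
  obtain ⟨v, hv, hderiv⟩ := h.hasDerivAt_log_q_div s hs.1.le
  exact ⟨v, hv.2.trans (mul_nonpos_of_nonneg_of_nonpos (h.m_pos s).le
    (sub_nonpos.2 (hdom s hs))), hderiv⟩

theorem p_div_le_of_dominated (h : ReducedFlow Δ₁ Δ₂ p m q) {T : ℝ} (hT : 0 ≤ T)
    (hdom : ∀ s ∈ Ioo 0 T, 5 * (Δ₁ * p s) ≤ Δ₂ * q s)
    (hp : ∀ s ∈ Ioo 0 T, 40 * p s ≤ m s) (hq : ∀ s ∈ Ioo 0 T, 8 * q s ≤ m s) :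
    p T / m T ≤ p 0 / m 0 := by
  refine (Real.log_le_log_iff (div_pos (h.p_pos T) (h.m_pos T))
    (div_pos (h.p_pos 0) (h.m_pos 0))).1 ?_
  refine le_of_hasDerivAt_nonpos (f := fun s => Real.log (p s / m s)) hT
    (h.continuousOn_log_p_div.mono Icc_subset_Ici_self)
    fun s hs => ⟨_, ?_, h.hasDerivAt_log_p_div s hs.1.le⟩
  have hgain : 0 < Δ₁ * p s := mul_pos h.gap₁_pos (h.p_pos s)
  have hm := h.m_pos s
  have hgrow : Δ₁ * p s * (2 * m s + q s) ≤ Δ₁ * p s * (5 * (m s - p s)) := by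
    gcongr
    linarith [hp s hs, hq s hs]
  have hdecay : 5 * (Δ₁ * p s) * (m s - p s) ≤ Δ₂ * q s * (m s - p s) :=
    mul_le_mul_of_nonneg_right (hdom s hs) (by linarith [hp s hs])
  linarith

theorem log_sub_log_le_of_dominated (h : ReducedFlow Δ₁ Δ₂ p m q) {T : ℝ} (hT : 0 ≤ T)
    (hdom : ∀ s ∈ Ioo 0 T, 5 * (Δ₁ * p s) ≤ Δ₂ * q s)
    (hp : ∀ s ∈ Ioo 0 T, 40 * p s ≤ m s) (hq : ∀ s ∈ Ioo 0 T, 8 * q s ≤ m s) :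
    7 * Real.log (p T / m T) - 2 * Real.log (q T / m T)
      ≤ 7 * Real.log (p 0 / m 0) - 2 * Real.log (q 0 / m 0) := by
  refine le_of_hasDerivAt_nonpos
    (f := fun s => 7 * Real.log (p s / m s) - 2 * Real.log (q s / m s)) hT
    (((h.continuousOn_log_p_div.const_mul 7).sub
      (h.continuousOn_log_q_div.const_mul 2)).mono Icc_subset_Ici_self) fun s hs => ?_
  obtain ⟨v, hv, hderiv⟩ := h.hasDerivAt_log_q_div s hs.1.le
  refine ⟨_, ?_, ((h.hasDerivAt_log_p_div s hs.1.le).const_mul 7).sub (hderiv.const_mul 2)⟩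
  have hgain : 0 < Δ₁ * p s := mul_pos h.gap₁_pos (h.p_pos s)
  have hm := h.m_pos s
  have hgrow : Δ₁ * p s * (12 * m s + 9 * q s) ≤ Δ₁ * p s * (5 * (3 * m s - 9 * p s)) := by
    gcongr
    linarith [hp s hs, hq s hs]
  have hdecay : 5 * (Δ₁ * p s) * (3 * m s - 9 * p s) ≤ Δ₂ * q s * (3 * m s - 9 * p s) :=
    mul_le_mul_of_nonneg_right (hdom s hs) (by linarith [hp s hs])
  linarith [hv.1]

theorem exists_dominated_until (h : ReducedFlow Δ₁ Δ₂ p m q) {t : ℝ} (ht : 0 ≤ t)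
    (hp₀ : 40 * p 0 < m 0) (hq₀ : 8 * q 0 ≤ m 0) (hcross : Δ₂ * q t ≤ Δ₁ * p t) :
    ∃ T ∈ Icc 0 t, Δ₂ * q T ≤ 5 * (Δ₁ * p T) ∧
      ∀ s ∈ Ioo 0 T, 5 * (Δ₁ * p s) ≤ Δ₂ * q s ∧ 40 * p s ≤ m s ∧ 8 * q s ≤ m s := by
  have hcont : ContinuousOn (fun s => max (5 * (Δ₁ * p s) - Δ₂ * q s) (40 * p s - m s))
      (Icc 0 t) := by
    have hp := h.continuousOn_p
    have hm := h.continuousOn_m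
    have hq := h.continuousOn_q
    exact ContinuousOn.mono (by fun_prop) Icc_subset_Ici_self
  obtain ⟨T, hT, hexit, hbefore⟩ := exists_first_le_of_continuousOn ht hcont
    (c := 0) (le_max_of_le_left (by linarith [mul_pos h.gap₁_pos (h.p_pos t)]))
  have hstay : ∀ s ∈ Ioo 0 T, 5 * (Δ₁ * p s) ≤ Δ₂ * q s ∧ 40 * p s ≤ m s := fun s hs => by
    have := max_lt_iff.1 (hbefore s ⟨hs.1.le, hs.2⟩)
    exact ⟨(sub_neg.1 this.1).le, (sub_neg.1 this.2).le⟩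
  have hq : ∀ s ∈ Ioo 0 T, 8 * q s ≤ m s := fun s hs => by
    have hdecr := h.q_div_le_of_dominated hs.1.le fun u hu => by
      linarith [(hstay u ⟨hu.1, hu.2.trans hs.2⟩).1, mul_pos h.gap₁_pos (h.p_pos u)]
    have hstart : q 0 / m 0 ≤ 1 / 8 := by
      rw [div_le_div_iff₀ (h.m_pos 0) (by norm_num)]; linarith
    have := hdecr.trans hstart
    rw [div_le_div_iff₀ (h.m_pos s) (by norm_num)] at this
    linarith
  refine ⟨T, hT, ?_, fun s hs => ⟨(hstay s hs).1, (hstay s hs).2, hq s hs⟩⟩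
  -- The exit cannot happen through `40 * p = m`, since `p / m` has not increased.
  have hp_T := h.p_div_le_of_dominated hT.1 (fun s hs => (hstay s hs).1)
    (fun s hs => (hstay s hs).2) hq
  have hp_small : p T / m T < 1 / 40 := by
    refine hp_T.trans_lt ?_
    rw [div_lt_div_iff₀ (h.m_pos 0) (by norm_num)]; linarith
  rw [div_lt_div_iff₀ (h.m_pos T) (by norm_num)] at hp_small
  rcases le_max_iff.1 hexit with hbad | hstar <;> linarith

theorem exists_switch (h : ReducedFlow Δ₁ Δ₂ p m q) {t : ℝ} (ht : 0 ≤ t)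
    (hp₀ : 40 * p 0 < m 0) (hq₀ : 8 * q 0 ≤ m 0) (hcross : Δ₂ * q t ≤ Δ₁ * p t) :
    ∃ T ∈ Icc 0 t, (p T / m T) ^ 5 * (Δ₂ * (q 0 / m 0)) ^ 2 ≤ 25 * Δ₁ ^ 2 * (p 0 / m 0) ^ 7 := by
  obtain ⟨T, hT, hratio, hdom⟩ := h.exists_dominated_until ht hp₀ hq₀ hcross
  refine ⟨T, hT, ?_⟩
  have hw (s : ℝ) : 0 < p s / m s := div_pos (h.p_pos s) (h.m_pos s)
  have hb (s : ℝ) : 0 < q s / m s := div_pos (h.q_pos s) (h.m_pos s)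
  have hpow : (p T / m T) ^ 7 * (q 0 / m 0) ^ 2 ≤ (p 0 / m 0) ^ 7 * (q T / m T) ^ 2 := by
    have hlog := h.log_sub_log_le_of_dominated hT.1 (fun s hs => (hdom s hs).1)
      (fun s hs => (hdom s hs).2.1) (fun s hs => (hdom s hs).2.2)
    rw [← Real.log_le_log_iff (mul_pos (pow_pos (hw T) 7) (pow_pos (hb 0) 2))
      (mul_pos (pow_pos (hw 0) 7) (pow_pos (hb T) 2)),
      Real.log_mul (pow_pos (hw T) 7).ne' (pow_pos (hb 0) 2).ne',
      Real.log_mul (pow_pos (hw 0) 7).ne' (pow_pos (hb T) 2).ne']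
    simp only [Real.log_pow, Nat.cast_ofNat]
    linarith
  have hbad : Δ₂ * (q T / m T) ≤ 5 * (Δ₁ * (p T / m T)) := by
    rw [← mul_div_assoc, ← mul_div_assoc, ← mul_div_assoc]
    exact div_le_div_of_nonneg_right hratio (h.m_pos T).le
  have hgap₂ := h.gap₂_pos
  have hbT := hb T
  have hw₀ := hw 0
  refine le_of_mul_le_mul_right ?_ (pow_pos (hw T) 2)
  calc (p T / m T) ^ 5 * (Δ₂ * (q 0 / m 0)) ^ 2 * (p T / m T) ^ 2
      = Δ₂ ^ 2 * ((p T / m T) ^ 7 * (q 0 / m 0) ^ 2) := by ring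
    _ ≤ Δ₂ ^ 2 * ((p 0 / m 0) ^ 7 * (q T / m T) ^ 2) := by gcongr
    _ = (p 0 / m 0) ^ 7 * (Δ₂ * (q T / m T)) ^ 2 := by ring
    _ ≤ (p 0 / m 0) ^ 7 * (5 * (Δ₁ * (p T / m T))) ^ 2 := by gcongr
    _ = 25 * Δ₁ ^ 2 * (p 0 / m 0) ^ 7 * (p T / m T) ^ 2 := by ring

theorem hasDerivAt_neg_m_div_p (h : ReducedFlow Δ₁ Δ₂ p m q) {s : ℝ} (hs : 0 ≤ s) :
    HasDerivAt (fun s => -(m s / p s))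
      (m s / p s * (Δ₁ * p s * (2 * m s + q s) - Δ₂ * q s * (m s - p s))) s := by
  have hexp (s : ℝ) : Real.exp (-Real.log (p s / m s)) = m s / p s := by
    rw [Real.exp_neg, Real.exp_log (div_pos (h.p_pos s) (h.m_pos s)), inv_div]
  have := (h.hasDerivAt_log_p_div s hs).fun_neg.exp.fun_neg
  simp only [hexp] at this
  exact this.congr_deriv (by ring)

theorem one_le_of_odds_doubled (h : ReducedFlow Δ₁ Δ₂ p m q) {T t : ℝ} (hT : 0 ≤ T) (hTt : T ≤ t)
    (hsmall : 2 * (Δ₁ + Δ₂) * (p T / m T) ≤ Δ₂) (hdouble : 2 * (p T / m T) ≤ p t / m t) :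
    1 ≤ 4 * (Δ₁ * (p T / m T)) * (t - T) := by
  have hgap₁ := h.gap₁_pos
  have hgap₂ := h.gap₂_pos
  obtain ⟨S, hS, hS_ge, hS_lt⟩ := exists_first_le_of_continuousOn hTt
    (h.continuousOn_p_div.mono (Icc_subset_Ici_self.trans (Ici_subset_Ici.2 hT))) hdouble
  have hslope := sub_le_mul_sub_of_hasDerivAt_le (f := fun s => -(m s / p s)) (C := 2 * Δ₁) hS.1
    (fun s hs => (h.hasDerivAt_neg_m_div_p (hT.trans hs.1)).continuousAt.continuousWithinAt)
    fun s hs => by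
      refine ⟨_, ?_, h.hasDerivAt_neg_m_div_p (hT.trans hs.1.le)⟩
      have hp := h.p_pos s
      have hm := h.m_pos s
      have hq := h.q_pos s
      have hm_le : m s ≤ 1 := by linarith [h.sum_eq_one s]
      have hdom : (Δ₁ + Δ₂) * p s ≤ Δ₂ * m s := by
        rw [← div_le_iff₀ hm, mul_div_assoc]
        calc (Δ₁ + Δ₂) * (p s / m s) ≤ (Δ₁ + Δ₂) * (2 * (p T / m T)) := by
              gcongr; exact (hS_lt s ⟨hs.1.le, hs.2⟩).le
          _ ≤ Δ₂ := by linarith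
      calc m s / p s * (Δ₁ * p s * (2 * m s + q s) - Δ₂ * q s * (m s - p s))
          = m s / p s * (2 * Δ₁ * p s * m s + q s * ((Δ₁ + Δ₂) * p s - Δ₂ * m s)) := by ring
        _ ≤ m s / p s * (2 * Δ₁ * p s * m s + q s * 0) := by gcongr; linarith
        _ = 2 * Δ₁ * m s ^ 2 := by field_simp; ring
        _ ≤ 2 * Δ₁ * 1 := by gcongr; exact pow_le_one₀ hm.le hm_le
        _ = 2 * Δ₁ := mul_one _
  have hwT : 0 < p T / m T := div_pos (h.p_pos T) (h.m_pos T)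
  have hhalf : m S / p S ≤ m T / p T / 2 := by
    have := inv_anti₀ (by positivity) hS_ge
    rwa [mul_inv_rev, inv_div, inv_div, ← div_eq_mul_inv] at this
  have hlater : Δ₁ * (S - T) ≤ Δ₁ * (t - T) := by gcongr; exact hS.2
  have hlower : m T / p T ≤ 4 * Δ₁ * (t - T) := by linarith
  calc 1 = m T / p T * (p T / m T) := by
        field_simp [(h.m_pos T).ne', (h.p_pos T).ne']
    _ ≤ 4 * Δ₁ * (t - T) * (p T / m T) := by gcongr
    _ = 4 * (Δ₁ * (p T / m T)) * (t - T) := by ring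

theorem gain_le_of_mem_Icc (h : ReducedFlow Δ₁ Δ₂ p m q) {T t : ℝ} (hT : T ∈ Icc 0 t)
    (ht : 1 / 2 ≤ t) (hgaps : Δ₁ + Δ₂ ≤ 2) (hsmall : 2 * (Δ₁ + Δ₂) * (p T / m T) ≤ Δ₂) :
    Δ₁ * p t - Δ₂ * q t ≤ 8 * ((Δ₁ + Δ₂) * (p T / m T)) * t := by
  have hgap₁ := h.gap₁_pos
  have hgap₂ := h.gap₂_pos
  have hp := h.p_pos t
  have hm := h.m_pos t
  have hq := h.q_pos t
  have hsum := h.sum_eq_one t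
  have hwT : 0 < p T / m T := div_pos (h.p_pos T) (h.m_pos T)
  have hgain : Δ₁ * p t - Δ₂ * q t ≤ Δ₁ * p t := sub_le_self _ (by positivity)
  rcases le_or_gt (2 * (p T / m T)) (p t / m t) with hdouble | hdouble
  · calc Δ₁ * p t - Δ₂ * q t ≤ Δ₁ * 1 := hgain.trans (by gcongr; linarith)
      _ ≤ 2 * 1 := by linarith
      _ ≤ 2 * (4 * (Δ₁ * (p T / m T)) * (t - T)) := by
          gcongr; exact h.one_le_of_odds_doubled hT.1 hT.2 hsmall hdouble
      _ ≤ 2 * (4 * ((Δ₁ + Δ₂) * (p T / m T)) * t) := by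
          gcongr <;> linarith [hT.1, hT.2]
      _ = 8 * ((Δ₁ + Δ₂) * (p T / m T)) * t := by ring
  · have hp_le : p t ≤ p t / m t := le_div_self hp.le hm (by linarith)
    calc Δ₁ * p t - Δ₂ * q t ≤ Δ₁ * p t := hgain
      _ ≤ (Δ₁ + Δ₂) * (2 * (p T / m T)) := by gcongr <;> linarith
      _ = 4 * ((Δ₁ + Δ₂) * (p T / m T)) * (1 / 2) := by ring
      _ ≤ 8 * ((Δ₁ + Δ₂) * (p T / m T)) * t := by gcongr; norm_num

theorem exists_mul_odds_le (h : ReducedFlow Δ₁ Δ₂ p m q) {B t : ℝ} (ht : 0 ≤ t)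
    (hB_le : B ≤ 1 / 10) (hB_pow : B ^ 13 = ((Δ₁ + Δ₂) * p 0) ^ 7)
    (hB : 0 < B) (hBq : 2 * B ≤ Δ₂ * q 0) (hp₀ : p 0 ≤ 1 / 80) (hq₀ : q 0 ≤ 1 / 10)
    (hcross : Δ₂ * q t ≤ Δ₁ * p t) :
    ∃ T ∈ Icc 0 t, (Δ₁ + Δ₂) * (p T / m T) ≤ 5 / 2 * B ^ 2 := by
  have hgap₁ := h.gap₁_pos
  have hgap₂ := h.gap₂_pos
  have hp := h.p_pos 0
  have hm := h.m_pos 0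
  have hq := h.q_pos 0
  have hsum := h.sum_eq_one 0
  obtain ⟨T, hT, hswitch⟩ := h.exists_switch ht (by linarith) (by linarith) hcross
  have hwT : 0 < p T / m T := div_pos (h.p_pos T) (h.m_pos T)
  have hw₀ : p 0 / m 0 ≤ 2 * p 0 := by rw [div_le_iff₀ hm]; nlinarith
  have hb₀ : 2 * B ≤ Δ₂ * (q 0 / m 0) :=
    hBq.trans (by gcongr; exact le_div_self hq.le hm (by linarith))
  refine ⟨T, hT, ?_⟩
  have hchain : ((Δ₁ + Δ₂) * (p T / m T)) ^ 5 * (2 * B) ^ 2 ≤ 3200 * B ^ 13 := by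
    calc ((Δ₁ + Δ₂) * (p T / m T)) ^ 5 * (2 * B) ^ 2
        ≤ ((Δ₁ + Δ₂) * (p T / m T)) ^ 5 * (Δ₂ * (q 0 / m 0)) ^ 2 := by gcongr
      _ = (Δ₁ + Δ₂) ^ 5 * ((p T / m T) ^ 5 * (Δ₂ * (q 0 / m 0)) ^ 2) := by ring
      _ ≤ (Δ₁ + Δ₂) ^ 5 * (25 * (Δ₁ + Δ₂) ^ 2 * (2 * p 0) ^ 7) := by
          refine mul_le_mul_of_nonneg_left (hswitch.trans ?_) (by positivity)
          gcongr
          linarith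
      _ = 3200 * B ^ 13 := by rw [hB_pow]; ring
  refine le_of_pow_le_pow_left₀ (n := 5) (by norm_num) (by positivity) ?_
  refine le_of_mul_le_mul_right (hchain.trans ?_) (pow_pos (mul_pos two_pos hB) 2)
  calc 3200 * B ^ 13 = 3200 * B ^ 12 * B := by ring
    _ ≤ 3200 * B ^ 12 * (1 / 10) := by gcongr
    _ ≤ (5 / 2 * B ^ 2) ^ 5 * (2 * B) ^ 2 := by
        ring_nf; gcongr; norm_num

theorem gain_le (h : ReducedFlow Δ₁ Δ₂ p m q) {B t : ℝ} (hgaps : Δ₁ + Δ₂ ≤ 2) (ht : 0 ≤ t)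
    (hB : 0 < B) (hB_pow : B ^ 13 = ((Δ₁ + Δ₂) * p 0) ^ 7) (hBq : 2 * B ≤ Δ₂ * q 0)
    (hq₀ : q 0 ≤ 1 / 10) :
    Δ₁ * p t - Δ₂ * q t ≤ 20 * B ^ 2 * t := by
  have hgap₁ := h.gap₁_pos
  have hgap₂ := h.gap₂_pos
  have hp := h.p_pos 0
  rcases le_total (Δ₁ * p t) (Δ₂ * q t) with hloss | hcross
  · exact (sub_nonpos.2 hloss).trans (by positivity)
  have hBgap : 20 * B ≤ Δ₂ := by nlinarith
  have hstart : (Δ₁ + Δ₂) * p 0 ≤ B / 4 :=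
    le_div_four_of_pow_eq hB.le (by linarith) hB_pow
  have hp₀ : p 0 ≤ 1 / 80 := by
    refine le_of_mul_le_mul_left (a := 20 * B) ?_ (by positivity)
    calc 20 * B * p 0 ≤ (Δ₁ + Δ₂) * p 0 := by gcongr; linarith
      _ ≤ 20 * B * (1 / 80) := by linarith
  have ht_half : 1 / 2 ≤ t := by
    have hlog := h.log_le_mul_of_crossing (c := Real.exp 1) (Real.exp_pos 1) ht
      (by nlinarith [Real.exp_one_lt_three, mul_pos hgap₁ hp]) hcross
    rw [Real.log_exp] at hlog
    nlinarith
  obtain ⟨T, hT, hodds⟩ :=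
    h.exists_mul_odds_le ht (by linarith) hB_pow hB hBq hp₀ hq₀ hcross
  calc Δ₁ * p t - Δ₂ * q t ≤ 8 * ((Δ₁ + Δ₂) * (p T / m T)) * t :=
        h.gain_le_of_mem_Icc hT ht_half hgaps (by nlinarith)
    _ ≤ 8 * (5 / 2 * B ^ 2) * t := by gcongr
    _ = 20 * B ^ 2 * t := by ring

end ReducedFlow

section Policy

variable {Y : Type*} [Fintype Y] {D : ℕ} (φ : Y → EuclideanSpace ℝ (Fin D))

theorem sum_exp_inner_pos [Nonempty Y] (θ : EuclideanSpace ℝ (Fin D)) :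
    0 < ∑ z, Real.exp ⟪φ z, θ⟫ :=
  Finset.sum_pos (fun _ _ => Real.exp_pos _) Finset.univ_nonempty

theorem policy_pos (θ : EuclideanSpace ℝ (Fin D)) (y : Y) : 0 < policy φ θ y :=
  have : Nonempty Y := ⟨y⟩
  div_pos (Real.exp_pos _) (sum_exp_inner_pos φ θ)

theorem sum_policy [Nonempty Y] (θ : EuclideanSpace ℝ (Fin D)) : ∑ y, policy φ θ y = 1 := by
  simp only [policy]
  rw [← Finset.sum_div, div_self (sum_exp_inner_pos φ θ).ne']

theorem hasGradientAt_log_sum_exp [Nonempty Y] (θ : EuclideanSpace ℝ (Fin D)) :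
    HasGradientAt (fun θ => Real.log (∑ z, Real.exp ⟪φ z, θ⟫)) (∑ z, policy φ θ z • φ z) θ := by
  rw [hasGradientAt_iff_hasFDerivAt]
  have hsum := HasFDerivAt.fun_sum (u := Finset.univ)
    fun z _ => ((innerSL ℝ (φ z)).hasFDerivAt (x := θ)).exp
  refine (hsum.log (sum_exp_inner_pos φ θ).ne').congr_fderiv ?_
  ext v
  simp [policy, Finset.mul_sum, div_eq_inv_mul, mul_assoc]

theorem log_policy (θ : EuclideanSpace ℝ (Fin D)) (y : Y) :
    Real.log (policy φ θ y) = ⟪φ y, θ⟫ - Real.log (∑ z, Real.exp ⟪φ z, θ⟫) := by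
  have : Nonempty Y := ⟨y⟩
  rw [policy, Real.log_div (Real.exp_ne_zero _) (sum_exp_inner_pos φ θ).ne', Real.log_exp]

theorem hasGradientAt_policy (θ : EuclideanSpace ℝ (Fin D)) (y : Y) :
    HasGradientAt (fun θ => policy φ θ y)
      (policy φ θ y • (φ y - ∑ z, policy φ θ z • φ z)) θ := by
  have : Nonempty Y := ⟨y⟩
  have hexp (θ : EuclideanSpace ℝ (Fin D)) :
      Real.exp (⟪φ y, θ⟫ - Real.log (∑ z, Real.exp ⟪φ z, θ⟫)) = policy φ θ y := by
    rw [← log_policy, Real.exp_log (policy_pos φ θ y)]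
  have hderiv := (((innerSL ℝ (φ y)).hasFDerivAt (x := θ)).sub
    (hasGradientAt_log_sum_exp φ θ).hasFDerivAt).exp
  rw [hasGradientAt_iff_hasFDerivAt]
  simp only [Pi.sub_apply, innerSL_apply_apply, hexp] at hderiv
  refine hderiv.congr_fderiv ?_
  ext v
  simp

theorem hasGradientAt_expReward (r : Y → ℝ) (θ : EuclideanSpace ℝ (Fin D)) :
    HasGradientAt (expReward φ r)
      (∑ y, (policy φ θ y * (r y - expReward φ r θ)) • φ y) θ := by
  have hderiv := HasFDerivAt.fun_sum (u := Finset.univ)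
    fun y _ => (hasGradientAt_policy φ θ y).hasFDerivAt.mul_const (r y)
  rw [hasGradientAt_iff_hasFDerivAt]
  refine hderiv.congr_fderiv ?_
  ext v
  have hmean : ∑ y, r y * (policy φ θ y * ∑ z, policy φ θ z * ⟪φ z, v⟫)
      = ∑ y, policy φ θ y * expReward φ r θ * ⟪φ y, v⟫ := by
    simp only [mul_right_comm _ (expReward φ r θ), ← Finset.sum_mul]
    rw [mul_comm, expReward, Finset.sum_mul]
    exact Finset.sum_congr rfl fun y _ => by ring
  simpa [mul_sub, sub_mul, Finset.sum_sub_distrib, mul_left_comm (r _), mul_assoc] using hmean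

theorem inner_gradient_expReward (horth : Orthonormal ℝ φ) (r : Y → ℝ)
    (θ : EuclideanSpace ℝ (Fin D)) (y : Y) :
    ⟪φ y, gradient (expReward φ r) θ⟫ = policy φ θ y * (r y - expReward φ r θ) := by
  rw [(hasGradientAt_expReward φ r θ).gradient, horth.inner_right_fintype]

variable {θ : ℝ → EuclideanSpace ℝ (Fin D)} {θ' : EuclideanSpace ℝ (Fin D)} {s : ℝ}

theorem hasDerivAt_policy (hθ : HasDerivAt θ θ' s) (y : Y) :
    HasDerivAt (fun s => policy φ (θ s) y)
      (policy φ (θ s) y * (⟪φ y, θ'⟫ - ∑ z, policy φ (θ s) z * ⟪φ z, θ'⟫)) s := by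
  refine ((hasGradientAt_policy φ (θ s) y).hasFDerivAt.comp_hasDerivAt s hθ).congr_deriv ?_
  simp

theorem hasDerivAt_log_sum_policy_div (hθ : HasDerivAt θ θ' s) {S : Finset Y} (hS : S.Nonempty)
    (z : Y) :
    HasDerivAt (fun s => Real.log ((∑ y ∈ S, policy φ (θ s) y) / policy φ (θ s) z))
      ((∑ y ∈ S, policy φ (θ s) y * ⟪φ y, θ'⟫) / (∑ y ∈ S, policy φ (θ s) y) - ⟪φ z, θ'⟫) s := by
  have hS_pos : 0 < ∑ y ∈ S, policy φ (θ s) y := Finset.sum_pos (fun y _ => policy_pos φ _ y) hS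
  have hz_pos := policy_pos φ (θ s) z
  have hsum := HasDerivAt.fun_sum fun y (_ : y ∈ S) => hasDerivAt_policy φ hθ y
  refine ((hsum.fun_div (hasDerivAt_policy φ hθ z) hz_pos.ne').log
    (div_pos hS_pos hz_pos).ne').congr_deriv ?_
  simp only [mul_sub, Finset.sum_sub_distrib, ← Finset.sum_mul]
  field_simp
  ring

theorem hasDerivAt_log_sum_policy_div_of_flow {φ : Y → EuclideanSpace ℝ (Fin D)} {r : Y → ℝ}
    (horth : Orthonormal ℝ φ) (hθ : HasDerivAt θ (gradient (expReward φ r) (θ s)) s)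
    {S : Finset Y} (hS : S.Nonempty) (z : Y) :
    HasDerivAt (fun s => Real.log ((∑ y ∈ S, policy φ (θ s) y) / policy φ (θ s) z))
      ((∑ y ∈ S, policy φ (θ s) y ^ 2 * (r y - expReward φ r (θ s)))
          / (∑ y ∈ S, policy φ (θ s) y)
        - policy φ (θ s) z * (r z - expReward φ r (θ s))) s := by
  have hderiv := hasDerivAt_log_sum_policy_div φ hθ hS z
  simpa only [inner_gradient_expReward φ horth, ← mul_assoc, ← sq] using hderiv

end Policy

/-- The reward structure assumption without its sign conditions: the outputs are a best output, an
intermediate output and a set of bad outputs with a common reward, represented by `ybad`. -/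
structure RewardStructure {Y : Type*} (r : Y → ℝ) (ystar ymed ybad : Y) (Ybad : Finset Y) :
    Prop where
  ybad_mem : ybad ∈ Ybad
  ystar_ne_ymed : ystar ≠ ymed
  ystar_notMem : ystar ∉ Ybad
  ymed_notMem : ymed ∉ Ybad
  cover (y : Y) : y = ystar ∨ y = ymed ∨ y ∈ Ybad
  ymed_lt_ystar : r ymed < r ystar
  ybad_lt_ymed : r ybad < r ymed
  eq_ybad_of_mem (y : Y) (hy : y ∈ Ybad) : r y = r ybad

namespace RewardStructure

variable {Y : Type*} {r : Y → ℝ} {ystar ymed ybad : Y} {Ybad : Finset Y}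

theorem sum_bad_mul_reward (h : RewardStructure r ystar ymed ybad Ybad) (f : Y → ℝ) (c : ℝ) :
    ∑ y ∈ Ybad, f y * (r y - c) = (∑ y ∈ Ybad, f y) * (r ybad - c) := by
  rw [Finset.sum_mul]
  exact Finset.sum_congr rfl fun y hy => by rw [h.eq_ybad_of_mem y hy]

variable [Fintype Y]

theorem sum_univ {R : Type*} [AddCommMonoid R] (h : RewardStructure r ystar ymed ybad Ybad)
    (f : Y → R) : ∑ y, f y = f ystar + f ymed + ∑ y ∈ Ybad, f y := by
  classical
  have huniv : (Finset.univ : Finset Y) = insert ystar (insert ymed Ybad) := by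
    ext y
    simpa using h.cover y
  rw [huniv, Finset.sum_insert (by simp [h.ystar_ne_ymed, h.ystar_notMem]),
    Finset.sum_insert h.ymed_notMem, add_assoc]

variable {D : ℕ} {φ : Y → EuclideanSpace ℝ (Fin D)}

theorem sum_policy_eq_one (h : RewardStructure r ystar ymed ybad Ybad)
    (φ : Y → EuclideanSpace ℝ (Fin D)) (θ : EuclideanSpace ℝ (Fin D)) :
    policy φ θ ystar + policy φ θ ymed + ∑ y ∈ Ybad, policy φ θ y = 1 := by
  have : Nonempty Y := ⟨ystar⟩
  rw [← h.sum_univ, sum_policy]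

theorem expReward_eq (h : RewardStructure r ystar ymed ybad Ybad)
    (φ : Y → EuclideanSpace ℝ (Fin D)) (θ : EuclideanSpace ℝ (Fin D)) :
    expReward φ r θ = r ymed + ((r ystar - r ymed) * policy φ θ ystar
      - (r ymed - r ybad) * ∑ y ∈ Ybad, policy φ θ y) := by
  have hbad := h.sum_bad_mul_reward (policy φ θ) 0
  simp only [sub_zero] at hbad
  rw [expReward, h.sum_univ, hbad]
  linear_combination r ymed * h.sum_policy_eq_one φ θ

theorem expReward_sub_bad (h : RewardStructure r ystar ymed ybad Ybad)
    (φ : Y → EuclideanSpace ℝ (Fin D)) (θ : EuclideanSpace ℝ (Fin D)) :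
    expReward φ r θ - r ybad
      = (r ystar - r ybad) * policy φ θ ystar + (r ymed - r ybad) * policy φ θ ymed := by
  rw [h.expReward_eq]
  linear_combination (r ybad - r ymed) * h.sum_policy_eq_one φ θ

variable {θ : ℝ → EuclideanSpace ℝ (Fin D)} {s : ℝ}

theorem hasDerivAt_log_policy_ystar_div (h : RewardStructure r ystar ymed ybad Ybad)
    (horth : Orthonormal ℝ φ) (hθ : HasDerivAt θ (gradient (expReward φ r) (θ s)) s) :
    HasDerivAt (fun s => Real.log (policy φ (θ s) ystar / policy φ (θ s) ymed))
      ((r ystar - r ymed) * policy φ (θ s) ystar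
          * (2 * policy φ (θ s) ymed + ∑ y ∈ Ybad, policy φ (θ s) y)
        - (r ymed - r ybad) * (∑ y ∈ Ybad, policy φ (θ s) y)
          * (policy φ (θ s) ymed - policy φ (θ s) ystar)) s := by
  have hderiv := hasDerivAt_log_sum_policy_div_of_flow horth hθ
    (Finset.singleton_nonempty ystar) ymed
  simp only [Finset.sum_singleton] at hderiv
  refine hderiv.congr_deriv ?_
  rw [h.expReward_eq, sq, mul_assoc, mul_div_cancel_left₀ _ (policy_pos φ (θ s) ystar).ne']
  linear_combination
    -(r ystar - r ymed) * policy φ (θ s) ystar * h.sum_policy_eq_one φ (θ s)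

theorem hasDerivAt_log_sum_policy_bad_div (h : RewardStructure r ystar ymed ybad Ybad)
    (horth : Orthonormal ℝ φ) (hθ : HasDerivAt θ (gradient (expReward φ r) (θ s)) s) :
    ∃ v ∈ Set.Icc
      ((r ystar - r ymed) * policy φ (θ s) ystar
          * (policy φ (θ s) ymed - ∑ y ∈ Ybad, policy φ (θ s) y)
        - (r ymed - r ybad) * (∑ y ∈ Ybad, policy φ (θ s) y)
          * (2 * policy φ (θ s) ymed + policy φ (θ s) ystar))
      (policy φ (θ s) ymed * ((r ystar - r ymed) * policy φ (θ s) ystar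
        - (r ymed - r ybad) * ∑ y ∈ Ybad, policy φ (θ s) y)),
      HasDerivAt (fun s => Real.log ((∑ y ∈ Ybad, policy φ (θ s) y) / policy φ (θ s) ymed))
        v s := by
  have hderiv := hasDerivAt_log_sum_policy_div_of_flow horth hθ ⟨ybad, h.ybad_mem⟩ ymed
  refine ⟨_, ?_, hderiv⟩
  have hsurplus : 0 ≤ expReward φ r (θ s) - r ybad := by
    rw [h.expReward_sub_bad]
    exact add_nonneg
      (mul_nonneg (by linarith [h.ymed_lt_ystar, h.ybad_lt_ymed]) (policy_pos φ _ _).le)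
      (mul_nonneg (by linarith [h.ybad_lt_ymed]) (policy_pos φ _ _).le)
  have hratio := sum_sq_div_sum_mem_Icc fun y (_ : y ∈ Ybad) => (policy_pos φ (θ s) y).le
  have hlower := mul_le_mul_of_nonneg_right hratio.2 hsurplus
  have hupper := mul_nonneg hratio.1 hsurplus
  rw [h.sum_bad_mul_reward, mul_div_right_comm, ← neg_sub _ (r ybad)]
  rw [h.expReward_sub_bad] at hlower hupper ⊢
  rw [h.expReward_eq]
  constructor <;> linarith

theorem reducedFlow (h : RewardStructure r ystar ymed ybad Ybad) (horth : Orthonormal ℝ φ)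
    (hflow : ∀ s, 0 ≤ s → HasDerivAt θ (gradient (expReward φ r) (θ s)) s) :
    ReducedFlow (r ystar - r ymed) (r ymed - r ybad) (fun s => policy φ (θ s) ystar)
      (fun s => policy φ (θ s) ymed) (fun s => ∑ y ∈ Ybad, policy φ (θ s) y) :=
  have hcont (y : Y) : ContinuousOn (fun s => policy φ (θ s) y) (Set.Ici 0) := fun s hs =>
    (hasDerivAt_policy φ (hflow s hs) y).continuousAt.continuousWithinAt
  { gap₁_pos := sub_pos.2 h.ymed_lt_ystar
    gap₂_pos := sub_pos.2 h.ybad_lt_ymed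
    p_pos _ := policy_pos φ _ _
    m_pos _ := policy_pos φ _ _
    q_pos _ := Finset.sum_pos (fun _ _ => policy_pos φ _ _) ⟨ybad, h.ybad_mem⟩
    sum_eq_one s := h.sum_policy_eq_one φ (θ s)
    continuousOn_p := hcont ystar
    continuousOn_m := hcont ymed
    continuousOn_q := continuousOn_finsetSum _ fun y _ => hcont y
    hasDerivAt_log_p_div s hs := h.hasDerivAt_log_policy_ystar_div horth (hflow s hs)
    hasDerivAt_log_q_div s hs := h.hasDerivAt_log_sum_policy_bad_div horth (hflow s hs) }

theorem expReward_le (h : RewardStructure r ystar ymed ybad Ybad) (horth : Orthonormal ℝ φ)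
    (hgaps : r ystar - r ybad ≤ 2)
    (hflow : ∀ s, 0 ≤ s → HasDerivAt θ (gradient (expReward φ r) (θ s)) s)
    (hstar : 2 * ((r ystar - r ybad) * policy φ (θ 0) ystar) ^ ((7 : ℝ) / 13)
      ≤ (r ymed - r ybad) * ∑ y ∈ Ybad, policy φ (θ 0) y)
    (hbad : ∑ y ∈ Ybad, policy φ (θ 0) y ≤ 1 / 10) {t : ℝ} (ht : 0 ≤ t) :
    expReward φ r (θ t)
      ≤ r ymed + 20 * ((r ystar - r ybad) * policy φ (θ 0) ystar) ^ ((14 : ℝ) / 13) * t := by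
  set x := (r ystar - r ybad) * policy φ (θ 0) ystar
  have hx_pos : 0 < x :=
    mul_pos (sub_pos.2 (h.ybad_lt_ymed.trans h.ymed_lt_ystar)) (policy_pos φ _ _)
  have hgap : r ystar - r ymed + (r ymed - r ybad) = r ystar - r ybad := sub_add_sub_cancel _ _ _
  have hpow (n : ℕ) : (x ^ ((7 : ℝ) / 13)) ^ n = x ^ ((7 : ℝ) / 13 * n) := by
    rw [Real.rpow_mul hx_pos.le, Real.rpow_natCast]
  have hpow_two : (x ^ ((7 : ℝ) / 13)) ^ 2 = x ^ ((14 : ℝ) / 13) := by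
    rw [hpow]; norm_num
  have hpow_thirteen : (x ^ ((7 : ℝ) / 13)) ^ 13 = x ^ 7 := by
    rw [hpow, ← Real.rpow_natCast]; norm_num
  have hgain := (h.reducedFlow horth hflow).gain_le (hgap.trans_le hgaps) ht
    (Real.rpow_pos_of_pos hx_pos _) (by rw [hpow_thirteen, hgap]) hstar hbad
  rw [hpow_two] at hgain
  rw [h.expReward_eq]
  linarith

end RewardStructure

theorem slow_opt_orthonormal_general {Y : Type*} [Fintype Y] {D : ℕ}
    {φ : Y → EuclideanSpace ℝ (Fin D)} (horth : Orthonormal ℝ φ)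
    {r : Y → ℝ} {ystar ymed ybad : Y} {Ybad : Finset Y}
    (h : RewardStructure r ystar ymed ybad Ybad) (hymed : 0 ≤ r ymed) (hybad : r ybad ≤ 0)
    {Δ₁ Δ₂ : ℝ} (hΔ₁ : Δ₁ = r ystar - r ymed) (hΔ₂ : Δ₂ = r ymed - r ybad) (hgaps : Δ₁ + Δ₂ ≤ 2)
    {θ : ℝ → EuclideanSpace ℝ (Fin D)}
    (hflow : ∀ s, 0 ≤ s → HasDerivAt θ (gradient (expReward φ r) (θ s)) s)
    {M : ℝ} (hM : 0 < M) (hgapsM : (Δ₁ + Δ₂) * M ≤ 1 / 20)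
    (hstar : 2 * policy φ (θ 0) ystar ^ ((7 : ℝ) / 13) / (Δ₂ * M ^ ((7 : ℝ) / 13))
      ≤ ∑ y ∈ Ybad, policy φ (θ 0) y)
    (hbad : ∑ y ∈ Ybad, policy φ (θ 0) y ≤ 1 / 10)
    {ε t : ℝ} (hε : ε ≤ Δ₁) (ht : 0 ≤ t) (hV : r ystar - ε ≤ expReward φ r (θ t)) :
    2 * Real.sqrt 2 * M ^ ((14 : ℝ) / 13) * Δ₁ * r ymed
        * (1 - Real.exp (-(Real.sqrt 2 * (Δ₁ - ε))))
        / ((Δ₁ + Δ₂) * (1 + 8 * Δ₁))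
        * policy φ (θ 0) ystar ^ (-(14 : ℝ) / 13) ≤ t := by
  have hsum : r ystar - r ybad = Δ₁ + Δ₂ := by rw [hΔ₁, hΔ₂]; ring
  have hΔ₁_pos : 0 < Δ₁ := hΔ₁ ▸ sub_pos.2 h.ymed_lt_ystar
  have hΔ₂_pos : 0 < Δ₂ := hΔ₂ ▸ sub_pos.2 h.ybad_lt_ymed
  have hK : 0 ≤ Δ₁ + Δ₂ := by positivity
  have hp : 0 < policy φ (θ 0) ystar := policy_pos φ _ _
  have hstart := two_mul_mul_rpow_le hK hM hp.le hΔ₂_pos (by norm_num) (by linarith) hstar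
  have hgain := h.expReward_le horth (by rwa [hsum]) hflow (by rwa [hsum, ← hΔ₂]) hbad ht
  rw [hsum] at hgain
  have htime := rpow_mul_rpow_neg_mul_le (a := 14 / 13) hK hM.le hp ht (by norm_num) hgapsM
    (show Δ₁ - ε ≤ _ by linarith)
  have hrate := rate_mul_one_sub_exp_le hΔ₁_pos hymed (show r ymed ≤ Δ₂ by linarith)
    (sub_nonneg.2 hε)
  rw [neg_div]
  refine le_trans (le_of_eq_of_le ?_ (mul_le_mul_of_nonneg_left hrate (by positivity))) htime
  ring

theorem slow_opt_orthonormal {Y : Type*} [Fintype Y] {D : ℕ}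
    (φ : Y → EuclideanSpace ℝ (Fin D)) (hφ : ∀ y, φ y ≠ 0)
    (horth : Orthonormal ℝ φ)
    (rG : Y → ℝ) (hrG : ∀ y, rG y ∈ Set.Icc (-1 : ℝ) 1)
    (ystar ymed ybad : Y) (Ybad : Finset Y) (hybad : ybad ∈ Ybad)
    (hsm : ystar ≠ ymed) (hsb : ystar ∉ Ybad) (hmb : ymed ∉ Ybad)
    (hcover : ∀ y : Y, y = ystar ∨ y = ymed ∨ y ∈ Ybad)
    (hr1 : rG ymed < rG ystar) (hr2 : 0 < rG ymed)
    (hr3 : ∀ y ∈ Ybad, rG y ≤ 0)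
    (hr4 : ∀ y ∈ Ybad, rG y = rG ybad)
    (Δ1 Δ2 : ℝ) (hΔ1 : Δ1 = rG ystar - rG ymed) (hΔ2 : Δ2 = rG ymed - rG ybad)
    (θt : ℝ → EuclideanSpace ℝ (Fin D))
    (hflow : ∀ t : ℝ, 0 ≤ t → HasDerivAt θt (gradient (expReward φ rG) (θt t)) t)
    (M : ℝ) (hM : M = min 1 (0.05 * rG ymed ^ ((2:ℝ)/7) / (Δ1 + Δ2)))
    (hinit1 : policy φ (θt 0) ystar
        < M * (min 0.01 (min ((21 / (1100 * (Δ1 + Δ2))) ^ ((7:ℝ)/3)) (Δ2 ^ 2))) ^ ((13:ℝ)/14))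
    (hinit2 : max (2 * policy φ (θt 0) ystar ^ ((7:ℝ)/13) / (Δ2 * M ^ ((7:ℝ)/13)))
        (0.05 * rG ymed) ≤ ∑ y ∈ Ybad, policy φ (θt 0) y)
    (hinit3 : ∑ y ∈ Ybad, policy φ (θt 0) y ≤ 0.1 * rG ymed)
    (ε : ℝ) (hε : ε ∈ Set.Ioo 0 Δ1)
    (t : ℝ) (ht : 0 ≤ t)
    (hV : rG ystar - ε ≤ expReward φ rG (θt t)) :
    2 * Real.sqrt 2 * M ^ ((14:ℝ)/13) * Δ1 * rG ymed
        * (1 - Real.exp (-(Real.sqrt 2 * (Δ1 - ε))))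
        / ((Δ1 + Δ2) * (1 + 8 * Δ1))
        * policy φ (θt 0) ystar ^ (-(14:ℝ)/13) ≤ t := by
  have h : RewardStructure rG ystar ymed ybad Ybad :=
    ⟨hybad, hsm, hsb, hmb, hcover, hr1, (hr3 ybad hybad).trans_lt hr2, hr4⟩
  have hK : 0 < Δ1 + Δ2 := by linarith [hr3 ybad hybad]
  exact slow_opt_orthonormal_general horth h hr2.le (hr3 ybad hybad) hΔ1 hΔ2
    (by linarith [(hrG ystar).2, (hrG ybad).1]) hflow (hM ▸ lt_min one_pos (by positivity))
    (hM ▸ mul_min_one_rpow_div_le hK ⟨hr2.le, (hrG ymed).2⟩ (by norm_num))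
    ((le_max_left _ _).trans hinit2) (by linarith [(hrG ymed).2]) hε.2.le ht hV
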